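/- Every even integer greater than three can be written as the sum of a prime and an odd square-free number. -/

import Mathlib

/-- bits at multiples of `d`, for multipliers below `M` -/
def sfMask (d M : ℕ) : ℕ := (2 ^ (d * M) - 1) / (2 ^ d - 1)

/-- union of the masks for the squares of 3, 5, ..., 2k+1 -/
def sfBits (N : ℕ) (k : ℕ) : ℕ :=
  Nat.rec 0 (fun i b => Nat.lor b (sfMask ((2*i+3)^2) (N / (2*i+3)^2 + 1))) k

/-- evaluate the argument before applying the function -/
def sfForce (b : ℕ) (f : ℕ → ℕ) : ℕ :=
  Nat.rec (f 0) (fun k _ => f (k+1)) b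

lemma sfForce_eq (b : ℕ) (f : ℕ → ℕ) : sfForce b f = f b := by
  cases b <;> rfl

/-- numbers `n` for which no `n - p` with `p` in the list is known to be good -/
def sfBad (b : ℕ) (l : List ℕ) (z : ℕ) : ℕ :=
  List.rec z (fun p _ ih => Nat.land (Nat.shiftLeft b p) ih) l

lemma sfMask_eq (d M : ℕ) (hd : 0 < d) : sfMask d M = ∑ j ∈ Finset.range M, (2^d)^j := by
  have h2 : 2 ≤ 2 ^ d := by
    calc 2 = 2^1 := rfl
      _ ≤ 2 ^ d := Nat.pow_le_pow_right (by norm_num) hd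
  rw [Nat.geomSum_eq h2, sfMask, pow_mul]

lemma sfMask_testBit (d M : ℕ) (hd : 0 < d) (j : ℕ) (hj : j < M) :
    (sfMask d M).testBit (d * j) = true := by
  rw [sfMask_eq d M hd]
  have h2 : 2 ≤ 2 ^ d := by
    calc 2 = 2^1 := rfl
      _ ≤ 2 ^ d := Nat.pow_le_pow_right (by norm_num) hd
  have hlt : ∀ M, ∑ j ∈ Finset.range M, (2^d)^j < 2 ^ (d * M) := by
    intro M
    rw [pow_mul]
    exact Nat.geomSum_lt h2 (by simp)
  induction M with
  | zero => omega
  | succ M ih =>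
    rw [Finset.sum_range_succ, add_comm, ← pow_mul]
    rcases Nat.lt_succ_iff_lt_or_eq.mp hj with h | h
    · rw [Nat.testBit_two_pow_add_gt]
      · exact ih h
      · exact Nat.mul_lt_mul_of_pos_left h hd
    · subst h
      rw [Nat.testBit_two_pow_add_eq, Nat.testBit_lt_two_pow (hlt _)]
      rfl

lemma sfBits_testBit (N k : ℕ) (i : ℕ) (hi : i < k) (r : ℕ) (hr : r ≤ N)
    (h : (2*i+3)^2 ∣ r) : (sfBits N k).testBit r = true := by
  induction k with
  | zero => omega
  | succ k ih =>
    change (Nat.lor (sfBits N k) (sfMask ((2*k+3)^2) (N / (2*k+3)^2 + 1))).testBit r = true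
    have e : ∀ a b : ℕ, Nat.lor a b = a ||| b := fun _ _ => rfl
    rw [e, Nat.testBit_or]
    rcases Nat.lt_succ_iff_lt_or_eq.mp hi with h' | h'
    · simp [ih h']
    · subst h'
      obtain ⟨j, rfl⟩ := h
      rw [sfMask_testBit _ _ (by positivity)]
      · simp
      · rw [Nat.lt_add_one_iff, Nat.le_div_iff_mul_le (by positivity)]
        linarith

lemma sfBad_testBit (b : ℕ) (l : List ℕ) (z n : ℕ) (hz : z.testBit n = true)
    (h : ∀ p ∈ l, p ≤ n ∧ b.testBit (n - p) = true) : (sfBad b l z).testBit n = true := by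
  induction l with
  | nil => exact hz
  | cons p l ih =>
    change (Nat.land (Nat.shiftLeft b p) (sfBad b l z)).testBit n = true
    have e : ∀ a b : ℕ, Nat.land a b = a &&& b := fun _ _ => rfl
    have e' : ∀ a b : ℕ, Nat.shiftLeft a b = a <<< b := fun _ _ => rfl
    rw [e, e', Nat.testBit_and, Nat.testBit_shiftLeft, ih (fun p hp => h p (by simp [hp]))]
    have := h p (by simp)
    simp [this]

/-- the list of small primes used -/
def sfList : List ℕ := [3,5,7,11,13,17,19,23,29,31,37,41,43,47,53,59,61]

lemma sfCheck : Nat.div (sfForce (sfBits 524288 361) (fun b => sfBad b sfList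
    (sfMask 2 262145))) (2^64) = 0 := by
  decide +kernel

lemma exists_odd_sq_of_not_squarefree (k : ℕ) (hk : Odd k) (h : ¬ Squarefree k) :
    ∃ q : ℕ, q.Prime ∧ Odd q ∧ q ^ 2 ∣ k := by
  rw [Nat.squarefree_iff_prime_squarefree] at h
  push Not at h
  obtain ⟨q, hq, hd⟩ := h
  refine ⟨q, hq, ?_, by rw [sq]; exact hd⟩
  rcases hq.eq_two_or_odd' with rfl | h'
  · exfalso
    have : (2:ℕ) ∣ k := (Dvd.intro _ rfl).trans hd
    rw [Nat.odd_iff] at hk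
    omega
  · exact h'

lemma finite_case_large (n : ℕ) (h1 : 64 ≤ n) (h2 : n ≤ 524288) (hne : Even n) :
    ∃ p k : ℕ, p.Prime ∧ Squarefree k ∧ Odd k ∧ n = p + k := by
  by_contra hcon
  push Not at hcon
  have hl : ∀ p ∈ sfList, p.Prime ∧ p ≤ n ∧ p % 2 = 1 := by
    intro p hp
    have : ∀ p ∈ sfList, p ≤ 64 ∧ p % 2 = 1 := by decide
    refine ⟨?_, (this p hp).1.trans h1, (this p hp).2⟩
    simp only [sfList, List.mem_cons, List.not_mem_nil, or_false] at hp
    rcases hp with h | h | h | h | h | h | h | h | h | h | h | h | h | h | h | h | h <;>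
      subst h <;> norm_num
  have key : (sfBad (sfBits 524288 361) sfList (sfMask 2 262145)).testBit n = true := by
    apply sfBad_testBit
    · obtain ⟨j, hj⟩ := hne
      have : n = 2 * j := by omega
      rw [this]
      exact sfMask_testBit _ _ (by norm_num) _ (by omega)
    · intro p hp
      obtain ⟨hp1, hp2, hp3⟩ := hl p hp
      refine ⟨hp2, ?_⟩
      have hodd : Odd (n - p) := by
        rw [Nat.odd_iff]; rw [Nat.even_iff] at hne; omega
      have hns : ¬ Squarefree (n - p) := fun hs => hcon p (n-p) hp1 hs hodd (by omega)
      obtain ⟨q, hq, hqo, hqd⟩ := exists_odd_sq_of_not_squarefree _ hodd hns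
      have hq3 : 3 ≤ q := by
        have := hq.two_le
        rw [Nat.odd_iff] at hqo
        omega
      have hle := Nat.le_of_dvd hodd.pos hqd
      have hlt : q < 725 := by
        have := hp1.pos
        by_contra! hh
        nlinarith [Nat.sub_lt_of_pos_le this hp2]
      rw [Nat.odd_iff] at hqo
      have : q = 2 * ((q-3)/2) + 3 := by omega
      rw [this] at hqd
      exact sfBits_testBit _ _ ((q-3)/2) (by omega) _ (by omega) hqd
  have hc := sfCheck
  rw [sfForce_eq] at hc
  have hlt : sfBad (sfBits 524288 361) sfList (sfMask 2 262145) < 2 ^ 64 := by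
    have e : ∀ a b : ℕ, Nat.div a b = a / b := fun _ _ => rfl
    rw [e, Nat.div_eq_zero_iff] at hc
    rcases hc with h | h
    · norm_num at h
    · exact h
  have := Nat.testBit_lt_two_pow (i := n) (hlt.trans_le (Nat.pow_le_pow_right (by norm_num) h1))
  rw [this] at key
  exact absurd key (by simp)

lemma finite_case (n : ℕ) (h1 : 3 < n) (h2 : n ≤ 524288) (hne : Even n) :
    ∃ p k : ℕ, p.Prime ∧ Squarefree k ∧ Odd k ∧ n = p + k := by
  by_cases h : 64 ≤ n
  · exact finite_case_large n h h2 hne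
  · have hsm : ∀ n < 64, 3 < n → n % 2 = 0 → ∃ p ∈ [3,5,7,11,13], p ≤ n ∧
        (n - p) % 2 = 1 ∧ (n - p) % 9 ≠ 0 ∧ (n-p) % 25 ≠ 0 ∧ (n-p) % 49 ≠ 0 := by decide
    obtain ⟨p, hp, hpn, ho, h9, h25, h49⟩ := hsm n (by omega) h1 (Nat.even_iff.mp hne)
    have hpp : p.Prime := by
      simp only [List.mem_cons, List.not_mem_nil, or_false] at hp
      rcases hp with h | h | h | h | h <;> subst h <;> norm_num
    refine ⟨p, n - p, hpp, ?_, Nat.odd_iff.mpr ho, by omega⟩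
    by_contra hns
    obtain ⟨q, hq, hqo, hqd⟩ := exists_odd_sq_of_not_squarefree _ (Nat.odd_iff.mpr ho) hns
    have hle := Nat.le_of_dvd (by omega) hqd
    have hlt : q < 8 := by
      by_contra! hh
      nlinarith [Nat.sub_le n p]
    have h2 := hq.two_le
    rw [Nat.odd_iff] at hqo
    interval_cases q <;> omega

section
open Finset

lemma coprime_part_dvd (m M D r : ℕ) (hM : M ∣ m.factorial) (hc : Nat.Coprime D M) :
    M ∣ ∏ j ∈ range m, (r + D * j) := by
  rcases Nat.eq_zero_or_pos M with h0 | hpos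
  · subst h0
    exact absurd (Nat.eq_zero_of_zero_dvd hM) (Nat.factorial_ne_zero m)
  have hu : IsUnit (D : ZMod M) := (ZMod.isUnit_iff_coprime D M).mpr hc
  obtain ⟨u, hu⟩ := hu
  have : NeZero M := ⟨hpos.ne'⟩
  obtain ⟨t, ht⟩ : ∃ t : ℕ, (t : ZMod M) = (↑u⁻¹ : ZMod M) * r :=
    ⟨((↑u⁻¹ : ZMod M) * r).val, by simp⟩
  have h1 : ((∏ j ∈ range m, (r + D * j) : ℕ) : ZMod M)
      = (D : ZMod M) ^ m * ((∏ j ∈ range m, (t + j) : ℕ) : ZMod M) := by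
    push_cast
    rw [← Finset.card_range m, ← Finset.prod_const, Finset.card_range, ← Finset.prod_mul_distrib]
    refine Finset.prod_congr rfl fun j _ => ?_
    rw [ht, ← hu, mul_add, ← mul_assoc]
    simp
  have h2 : M ∣ ∏ j ∈ range m, (t + j) := by
    have := Nat.factorial_coe_dvd_prod m (t : ℤ)
    have h3 : m.factorial ∣ ∏ j ∈ range m, (t + j) := by exact_mod_cast this
    exact hM.trans h3
  rw [← ZMod.natCast_eq_zero_iff, h1, (ZMod.natCast_eq_zero_iff _ _).mpr h2, mul_zero]

lemma factorial_split (q m : ℕ) (hq : q.Prime) (hqo : Odd q) :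
    ∃ M a b : ℕ, m.factorial = 2 ^ a * q ^ b * M ∧ a ≤ m ∧ b ≤ m / (q - 1) ∧
      Nat.Coprime (2 * q ^ 2) M := by
  obtain ⟨M1, h1, h1'⟩ : ∃ M1, ¬ 2 ∣ M1 ∧ m.factorial = 2 ^ (m.factorial.factorization 2) * M1 :=
    ⟨_, Nat.not_dvd_ordCompl Nat.prime_two (Nat.factorial_ne_zero m),
      (Nat.ordProj_mul_ordCompl_eq_self _ _).symm⟩
  have hM1 : M1 ≠ 0 := by rintro rfl; simp at h1
  obtain ⟨M, h2, h2'⟩ : ∃ M, ¬ q ∣ M ∧ M1 = q ^ (M1.factorization q) * M :=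
    ⟨_, Nat.not_dvd_ordCompl hq hM1, (Nat.ordProj_mul_ordCompl_eq_self _ _).symm⟩
  refine ⟨M, m.factorial.factorization 2, M1.factorization q, ?_, ?_, ?_, ?_⟩
  · rw [mul_assoc, ← h2', ← h1']
  · simpa using Nat.factorization_factorial_le_div_pred Nat.prime_two m
  · refine le_trans ?_ (Nat.factorization_factorial_le_div_pred hq m)
    have : M1 ∣ m.factorial := by rw [h1']; exact Dvd.intro_left _ rfl
    exact (Nat.factorization_le_iff_dvd hM1 (Nat.factorial_ne_zero m)).mpr this q
  · apply Nat.Coprime.mul_left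
    · rw [Nat.Prime.coprime_iff_not_dvd Nat.prime_two]
      intro h
      exact h1 (h.trans (by rw [h2']; exact Dvd.intro_left _ rfl))
    · exact Nat.Coprime.pow_left _ ((Nat.Prime.coprime_iff_not_dvd hq).mpr h2)

noncomputable def cq (q : ℕ) : ℝ := 2 * Real.log 2 + 2 * Real.log q + Real.log q / (q - 1)

lemma prod_class_le (D r m : ℕ) (hr : r ≤ D) :
    ∏ j ∈ range m, (r + D * j) ≤ D ^ m * m.factorial := by
  induction m with
  | zero => simp
  | succ m ih =>
    rw [prod_range_succ, pow_succ, Nat.factorial_succ]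
    calc _ ≤ (D ^ m * m.factorial) * (D + D * m) := by gcongr
      _ = _ := by ring

lemma class_large (q r m : ℕ) (hq : q.Prime) (hqo : Odd q) (hr1 : 1 ≤ r) (hr : r ≤ 2 * q ^ 2) :
    ∑ j ∈ range m with (r + 2 * q ^ 2 * j).Prime ∧ m < r + 2 * q ^ 2 * j,
      Real.log ((r + 2 * q ^ 2 * j : ℕ) : ℝ) ≤ m * cq q := by
  set D := 2 * q ^ 2 with hD
  have hDpos : 0 < D := by have := hq.pos; positivity
  obtain ⟨M, a, b, hf, ha, hb, hc⟩ := factorial_split q m hq hqo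
  set S := {j ∈ range m | (r + D * j).Prime ∧ m < r + D * j} with hS
  have hMdvd : M ∣ m.factorial := by rw [hf]; exact Dvd.intro_left _ rfl
  have hMne : M ≠ 0 := by rintro rfl; exact Nat.factorial_ne_zero m (by simpa using hf)
  have hdvd1 := coprime_part_dvd m M D r hMdvd hc
  have hdvd2 : ∏ j ∈ S, (r + D * j) ∣ ∏ j ∈ range m, (r + D * j) :=
    Finset.prod_dvd_prod_of_subset _ _ _ (Finset.filter_subset _ _)
  have hcop : Nat.Coprime (∏ j ∈ S, (r + D * j)) M := by
    apply Nat.Coprime.prod_left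
    intro j hj
    rw [hS, mem_filter] at hj
    obtain ⟨_, hp, hlt⟩ := hj
    rw [hp.coprime_iff_not_dvd]
    intro h
    have := (hp.dvd_factorial).mp (h.trans hMdvd)
    omega
  have hdvd := hcop.mul_dvd_of_dvd_of_dvd hdvd2 hdvd1
  have hPpos : 0 < ∏ j ∈ range m, (r + D * j) := Finset.prod_pos fun j _ => by omega
  have hle := (Nat.le_of_dvd hPpos hdvd).trans (prod_class_le D r m hr)
  rw [hf] at hle
  have hle2 : ∏ j ∈ S, (r + D * j) ≤ D ^ m * (2 ^ a * q ^ b) := by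
    refine Nat.le_of_mul_le_mul_right ?_ (Nat.pos_of_ne_zero hMne)
    calc _ ≤ _ := hle
      _ = _ := by ring
  have hSpos : 0 < ∏ j ∈ S, (r + D * j) := Finset.prod_pos fun j _ => by omega
  have hlog : Real.log ((∏ j ∈ S, (r + D * j) : ℕ) : ℝ)
      ≤ Real.log ((D ^ m * (2 ^ a * q ^ b) : ℕ) : ℝ) :=
    Real.log_le_log (by exact_mod_cast hSpos) (by exact_mod_cast hle2)
  have hq0 : (q : ℝ) ≠ 0 := by exact_mod_cast hq.ne_zero
  have hq1 : (2 : ℝ) ≤ q := by exact_mod_cast hq.two_le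
  have hlq : 0 ≤ Real.log q := Real.log_nonneg (by linarith)
  rw [Nat.cast_prod, Real.log_prod (fun j _ => by positivity)] at hlog
  refine hlog.trans ?_
  have hexp : Real.log ((D ^ m * (2 ^ a * q ^ b) : ℕ) : ℝ)
      = m * (Real.log 2 + 2 * Real.log q) + (a * Real.log 2 + b * Real.log q) := by
    rw [hD]
    push_cast
    rw [Real.log_mul (by positivity) (by positivity), Real.log_mul (by positivity) (by positivity),
      Real.log_pow, Real.log_pow, Real.log_pow, Real.log_mul (by norm_num) (by positivity),
      Real.log_pow]
    push_cast
    ring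
  rw [hexp]
  have hb' : (b : ℝ) ≤ m / (q - 1) := by
    have h1 : (b : ℝ) ≤ ((m / (q - 1) : ℕ) : ℝ) := by exact_mod_cast hb
    refine h1.trans (Nat.cast_div_le.trans ?_)
    rw [Nat.cast_sub hq.one_le]; simp
  have ha' : (a : ℝ) ≤ m := by exact_mod_cast ha
  have hl2 : 0 ≤ Real.log 2 := Real.log_nonneg (by norm_num)
  have e1 := mul_le_mul_of_nonneg_right ha' hl2
  have e2 := mul_le_mul_of_nonneg_right hb' hlq
  have e3 : (m:ℝ) / (q - 1) * Real.log q = m * (Real.log q / (q - 1)) := by ring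
  rw [cq]
  nlinarith

lemma class_step (q r m : ℕ) (hq : q.Prime) (hqo : Odd q) (hr1 : 1 ≤ r) (hr : r ≤ 2 * q ^ 2) :
    ∑ j ∈ range m with (r + 2 * q ^ 2 * j).Prime,
      Real.log ((r + 2 * q ^ 2 * j : ℕ) : ℝ) ≤ m * cq q +
    ∑ j ∈ range m with (r + 2 * q ^ 2 * j).Prime ∧ r + 2 * q ^ 2 * j ≤ m,
      Real.log ((r + 2 * q ^ 2 * j : ℕ) : ℝ) := by
  refine le_trans (le_of_eq ?_) (add_le_add_left (class_large q r m hq hqo hr1 hr) _)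
  rw [← Finset.sum_filter_add_sum_filter_not _ (fun j => m < r + 2 * q ^ 2 * j), filter_filter,
    filter_filter]
  simp only [not_lt]

lemma class_total (q r m : ℕ) (hq : q.Prime) (hqo : Odd q) (hr1 : 1 ≤ r) (hr : r ≤ 2 * q ^ 2) :
    ∑ j ∈ range m with (r + 2 * q ^ 2 * j).Prime,
      Real.log ((r + 2 * q ^ 2 * j : ℕ) : ℝ) ≤ m * cq q +
      (((m - 1) / (2 * q ^ 2) + 1 : ℕ) : ℝ) * (cq q + Real.log 4) := by
  have hDpos : 0 < 2 * q ^ 2 := by have := hq.pos; positivity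
  set m1 := (m - 1) / (2 * q ^ 2) + 1 with hm1
  have hnn : ∀ k : ℕ, 0 ≤ Real.log (k : ℝ) := fun k => Real.log_natCast_nonneg k
  refine (class_step q r m hq hqo hr1 hr).trans ?_
  have h1 : ∑ j ∈ range m with (r + 2 * q ^ 2 * j).Prime ∧ r + 2 * q ^ 2 * j ≤ m,
      Real.log ((r + 2 * q ^ 2 * j : ℕ) : ℝ) ≤ ∑ j ∈ range m1 with (r + 2 * q ^ 2 * j).Prime,
      Real.log ((r + 2 * q ^ 2 * j : ℕ) : ℝ) := by
    apply Finset.sum_le_sum_of_subset_of_nonneg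
    · intro j hj
      simp only [mem_filter, mem_range] at hj ⊢
      refine ⟨?_, hj.2.1⟩
      rw [hm1, Nat.lt_add_one_iff, Nat.le_div_iff_mul_le hDpos]
      have := hj.2.2
      have e : j * (2 * q ^ 2) = 2 * q ^ 2 * j := by ring
      omega
    · intro j _ _; exact hnn _
  have h2 := class_step q r m1 hq hqo hr1 hr
  have h3 : ∑ j ∈ range m1 with (r + 2 * q ^ 2 * j).Prime ∧ r + 2 * q ^ 2 * j ≤ m1,
      Real.log ((r + 2 * q ^ 2 * j : ℕ) : ℝ) ≤ Chebyshev.theta (m1 : ℝ) := by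
    rw [Chebyshev.theta, Nat.floor_natCast]
    rw [← Finset.sum_image (g := fun j => r + 2 * q ^ 2 * j) (f := fun p : ℕ => Real.log (p : ℝ))]
    · apply Finset.sum_le_sum_of_subset_of_nonneg
      · intro p hp
        simp only [mem_image, mem_filter, mem_range, mem_Ioc] at hp ⊢
        obtain ⟨j, ⟨_, hj1, hj2⟩, rfl⟩ := hp
        exact ⟨⟨hj1.pos, hj2⟩, hj1⟩
      · intro j _ _; exact hnn _
    · intro i _ j _ hij
      simp only at hij
      exact Nat.eq_of_mul_eq_mul_left hDpos (by omega)
  have h4 := Chebyshev.theta_le_log4_mul_x (x := (m1 : ℝ)) (by positivity)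
  linarith

/-- the primes p < n with n - p odd and divisible by q^2 -/
def badPrimes (n q : ℕ) : Finset ℕ := {p ∈ range n | p.Prime ∧ Odd (n - p) ∧ q ^ 2 ∣ n - p}

lemma cq_ge (q : ℕ) (hq : q.Prime) : Real.log q ≤ cq q ∧ 0 ≤ cq q := by
  have hq1 : (2 : ℝ) ≤ q := by exact_mod_cast hq.two_le
  have hlq : 0 ≤ Real.log q := Real.log_nonneg (by linarith)
  have hl2 : 0 ≤ Real.log 2 := Real.log_nonneg (by norm_num)
  have : 0 ≤ Real.log q / (q - 1) := div_nonneg hlq (by linarith)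
  unfold cq
  constructor <;> linarith

lemma badPrimes_sum (n q : ℕ) (hq : q.Prime) (hqo : Odd q) (hn : Even n) (hqn : q ^ 2 < n) :
    ∑ p ∈ badPrimes n q, Real.log (p : ℝ) ≤
      (n : ℝ) * (cq q / (2 * q ^ 2) + (cq q + Real.log 4) / (2 * q ^ 2) ^ 2)
        + (3 / 2 * cq q + Real.log 4) := by
  have hDpos : 0 < 2 * q ^ 2 := by have := hq.pos; positivity
  set x := n - q ^ 2 with hx
  set r := (x - 1) % (2 * q ^ 2) + 1 with hr
  set m := (x - 1) / (2 * q ^ 2) + 1 with hm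
  have hr2 : r ≤ 2 * q ^ 2 := Nat.mod_lt _ hDpos
  have htot := class_total q r m hq hqo (by omega) hr2
  have hnn : ∀ k : ℕ, 0 ≤ Real.log (k : ℝ) := fun k => Real.log_natCast_nonneg k
  have hsub : ∑ p ∈ badPrimes n q, Real.log (p : ℝ) ≤
      ∑ j ∈ range m with (r + 2 * q ^ 2 * j).Prime,
      Real.log ((r + 2 * q ^ 2 * j : ℕ) : ℝ) := by
    rw [← Finset.sum_image (g := fun j => r + 2 * q ^ 2 * j) (f := fun p : ℕ => Real.log (p : ℝ))]
    · apply Finset.sum_le_sum_of_subset_of_nonneg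
      · intro p hp
        simp only [badPrimes, mem_image, mem_filter, mem_range] at hp ⊢
        obtain ⟨hpn, hpp, hpo, t, ht⟩ := hp
        have hto : Odd t := by
          rw [ht] at hpo
          exact (Nat.odd_mul.mp hpo).2
        obtain ⟨s, hs⟩ := hto
        have hxp : x - 1 = (p - 1) + 2 * q ^ 2 * s := by
          have : n - p = q ^ 2 + 2 * q ^ 2 * s := by rw [ht, hs]; ring
          have := hpp.pos
          omega
        have hmod : (x - 1) % (2 * q ^ 2) = (p - 1) % (2 * q ^ 2) := by
          rw [hxp, Nat.add_mul_mod_self_left]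
        have e : r + 2 * q ^ 2 * ((p - 1) / (2 * q ^ 2)) = p := by
          rw [hr, hmod]
          have := Nat.mod_add_div (p - 1) (2 * q ^ 2)
          have := hpp.pos
          omega
        refine ⟨(p - 1) / (2 * q ^ 2), ⟨?_, by rwa [e]⟩, e⟩
        rw [hm, Nat.lt_add_one_iff]
        exact Nat.div_le_div_right (by omega)
      · intro j _ _; exact hnn _
    · intro i _ j _ hij
      simp only at hij
      exact Nat.eq_of_mul_eq_mul_left hDpos (by omega)
  refine (hsub.trans htot).trans ?_
  have hD' : (0:ℝ) < 2 * q ^ 2 := by exact_mod_cast hDpos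
  have hmr : (m : ℝ) ≤ n / (2 * q ^ 2) + 1 / 2 := by
    rw [hm]
    push_cast
    have h1 : (((x - 1) / (2 * q ^ 2) : ℕ) : ℝ) ≤ ((x - 1 : ℕ) : ℝ) / ((2 * q ^ 2 : ℕ) : ℝ) :=
      Nat.cast_div_le
    have h2 : ((x - 1 : ℕ) : ℝ) ≤ n - q ^ 2 := by
      have : x - 1 + q ^ 2 ≤ n := by omega
      have : ((x - 1 : ℕ) : ℝ) + q ^ 2 ≤ n := by exact_mod_cast this
      linarith
    have h3 : ((x - 1 : ℕ) : ℝ) / ((2 * q ^ 2 : ℕ) : ℝ) ≤ (n - q ^ 2) / (2 * q ^ 2) := by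
      push_cast
      gcongr
    have h4 : ((n:ℝ) - q ^ 2) / (2 * q ^ 2) = n / (2 * q ^ 2) - 1 / 2 := by
      have : (q:ℝ) ≠ 0 := by exact_mod_cast hq.ne_zero
      rw [sub_div]
      congr 1
      field_simp
    linarith
  have hm1r : (((m - 1) / (2 * q ^ 2) + 1 : ℕ) : ℝ) ≤ n / (2 * q ^ 2) ^ 2 + 1 := by
    push_cast
    have h1 : (((m - 1) / (2 * q ^ 2) : ℕ) : ℝ) ≤ ((m - 1 : ℕ) : ℝ) / ((2 * q ^ 2 : ℕ) : ℝ) :=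
      Nat.cast_div_le
    have h2 : ((m - 1 : ℕ) : ℝ) ≤ n / (2 * q ^ 2) := by
      rw [Nat.cast_sub (by rw [hm]; exact Nat.le_add_left _ _)]
      push_cast
      linarith
    have h3 : ((m - 1 : ℕ) : ℝ) / ((2 * q ^ 2 : ℕ) : ℝ) ≤ (n / (2 * q ^ 2)) / (2 * q ^ 2) := by
      push_cast
      gcongr
    have h4 : (n:ℝ) / (2 * q ^ 2) / (2 * q ^ 2) = n / (2 * q ^ 2) ^ 2 := by
      field_simp
    linarith
  have hc := (cq_ge q hq).2
  have hl4 : 0 ≤ Real.log 4 := Real.log_nonneg (by norm_num)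
  have f1 := mul_le_mul_of_nonneg_right hmr hc
  have f2 := mul_le_mul_of_nonneg_right hm1r (add_nonneg hc hl4)
  refine (add_le_add f1 f2).trans (le_of_eq ?_)
  ring

lemma tail_step (k : ℝ) (hk : 5 ≤ k) :
    Real.log (3 * k) / k ^ 2 ≤
      ((Real.log (3 * (k - 2)) + 1) / (k - 2) - (Real.log (3 * k) + 1) / k) / 2 := by
  have hk2 : 0 < k - 2 := by linarith
  have hk0 : 0 < k := by linarith
  have h1 : Real.log (3 * k) - 2 / (k - 2) ≤ Real.log (3 * (k - 2)) := by
    have h := Real.log_le_sub_one_of_pos (x := k / (k - 2)) (by positivity)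
    have e : Real.log (3 * k) = Real.log (3 * (k - 2)) + Real.log (k / (k - 2)) := by
      rw [← Real.log_mul (by positivity) (by positivity)]
      congr 1
      field_simp
    have e2 : k / (k - 2) - 1 = 2 / (k - 2) := by
      field_simp
      ring
    linarith
  have hL : 2 ≤ Real.log (3 * k) := by
    rw [Real.le_log_iff_exp_le (by positivity)]
    have : Real.exp 2 = Real.exp 1 * Real.exp 1 := by rw [← Real.exp_add]; norm_num
    rw [this]
    nlinarith [Real.exp_one_lt_d9, Real.exp_pos 1]
  set L := Real.log (3 * k)
  have h2 : (L - 2 / (k - 2) + 1) / (k - 2) ≤ (Real.log (3 * (k - 2)) + 1) / (k - 2) := by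
    gcongr
  have h3 : L / k ^ 2 ≤ ((L - 2 / (k - 2) + 1) / (k - 2) - (L + 1) / k) / 2 := by
    have e : ((L - 2 / (k - 2) + 1) / (k - 2) - (L + 1) / k) / 2 - L / k ^ 2
        = 2 * (L * (k - 2) - k) / (k ^ 2 * (k - 2) ^ 2) := by
      field_simp
      ring
    have : 0 ≤ 2 * (L * (k - 2) - k) / (k ^ 2 * (k - 2) ^ 2) := by
      apply div_nonneg
      · nlinarith
      · positivity
    linarith
  linarith

lemma tail_sum (N : ℕ) :
    ∑ i ∈ range N, Real.log (3 * ((17 + 2 * i : ℕ) : ℝ)) / ((17 + 2 * i : ℕ) : ℝ) ^ 2 ≤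
      (Real.log 45 + 1) / 30 := by
  have h : ∀ N : ℕ,
      ∑ i ∈ range N, Real.log (3 * ((17 + 2 * i : ℕ) : ℝ)) / ((17 + 2 * i : ℕ) : ℝ) ^ 2 ≤
      (Real.log 45 + 1) / 30 - (Real.log (3 * (15 + 2 * N)) + 1) / (15 + 2 * N) / 2 := by
    intro N
    induction N with
    | zero => norm_num; apply le_of_eq; ring
    | succ N ih =>
      rw [sum_range_succ]
      have := tail_step (17 + 2 * N) (by linarith [(Nat.cast_nonneg N : (0:ℝ) ≤ N)])
      have e1 : (17 + 2 * (N:ℝ) - 2) = 15 + 2 * N := by ring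
      have e2 : (15 + 2 * ((N:ℝ) + 1)) = 17 + 2 * N := by ring
      rw [e1] at this
      push_cast at ih ⊢
      rw [e2]
      linarith
  refine (h N).trans ?_
  have : 0 ≤ (Real.log (3 * (15 + 2 * (N:ℝ))) + 1) / (15 + 2 * N) / 2 := by
    have : 0 ≤ Real.log (3 * (15 + 2 * (N:ℝ))) :=
      Real.log_nonneg (by linarith [(Nat.cast_nonneg N : (0:ℝ) ≤ N)])
    positivity
  linarith

noncomputable def wq (q : ℕ) : ℝ := cq q / (2 * q ^ 2) + (cq q + Real.log 4) / (2 * q ^ 2) ^ 2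

lemma wq_nonneg (q : ℕ) (hq : q.Prime) : 0 ≤ wq q := by
  have := (cq_ge q hq).2
  have hl4 : 0 ≤ Real.log 4 := Real.log_nonneg (by norm_num)
  unfold wq
  positivity

lemma log_four : Real.log 4 = 2 * Real.log 2 := by
  rw [show (4:ℝ) = 2 ^ 2 by norm_num, Real.log_pow]; norm_num

lemma wq_large (q : ℕ) (hq : 17 ≤ q) : wq q ≤ Real.log (3 * q) / q ^ 2 := by
  have hq' : (17:ℝ) ≤ q := by exact_mod_cast hq
  have hq0 : (0:ℝ) < q := by linarith
  have l2 := Real.log_two_lt_d9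
  have l2' := Real.log_two_gt_d9
  set ℓ := Real.log 2 with hℓ
  have h1 : Real.log q ≤ q / 4 + 2 * ℓ - 1 := by
    have h := Real.log_le_sub_one_of_pos (x := (q:ℝ) / 4) (by positivity)
    rw [Real.log_div (by positivity) (by norm_num), log_four] at h
    linarith
  have h0 : 0 ≤ Real.log q := Real.log_nonneg (by linarith)
  have h15 : ℓ / 2 ≤ Real.log 3 - ℓ := by
    have : (3:ℝ) * ℓ ≤ 2 * Real.log 3 := by
      have := Real.log_le_log (x := (2:ℝ) ^ 3) (y := (3:ℝ) ^ 2) (by norm_num) (by norm_num)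
      rw [Real.log_pow, Real.log_pow] at this
      exact_mod_cast this
    linarith
  have h2 : Real.log q / (q - 1) ≤ 0.3 := by
    rw [div_le_iff₀ (by linarith)]
    nlinarith
  have hlog3 : Real.log (3 * q) = Real.log 3 + Real.log q :=
    Real.log_mul (by norm_num) (by positivity)
  rw [hlog3, wq, log_four]
  have hc : cq q ≤ 2 * ℓ + 2 * Real.log q + 0.3 := by unfold cq; linarith
  have h3 : (cq q + 2 * ℓ) / (2 * q ^ 2) ≤ 0.05 := by
    rw [div_le_iff₀ (by positivity)]
    nlinarith
  have e : cq q / (2 * q ^ 2) + (cq q + 2 * ℓ) / (2 * q ^ 2) ^ 2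
      = (cq q + (cq q + 2 * ℓ) / (2 * q ^ 2)) / 2 / q ^ 2 := by
    field_simp
  rw [e]
  gcongr
  linarith

lemma log_le_of_pow (q a b : ℕ) (hq : 0 < q) (ha : 0 < a) (h : q ^ a ≤ 2 ^ b) :
    Real.log q ≤ b / a * Real.log 2 := by
  have hq' : (0:ℝ) < q := by exact_mod_cast hq
  have ha' : (0:ℝ) < a := by exact_mod_cast ha
  have := Real.log_le_log (x := (q:ℝ) ^ a) (y := (2:ℝ) ^ b) (by positivity) (by exact_mod_cast h)
  rw [Real.log_pow, Real.log_pow] at this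
  rw [div_mul_eq_mul_div, le_div_iff₀ ha']
  linarith

lemma head_sum : wq 3 + wq 5 + wq 7 + wq 11 + wq 13 ≤ 0.4568 := by
  have l2 := Real.log_two_lt_d9
  have h3 := log_le_of_pow 3 5 8 (by norm_num) (by norm_num) (by norm_num)
  have h5 := log_le_of_pow 5 3 7 (by norm_num) (by norm_num) (by norm_num)
  have h7 := log_le_of_pow 7 6 17 (by norm_num) (by norm_num) (by norm_num)
  have h11 := log_le_of_pow 11 2 7 (by norm_num) (by norm_num) (by norm_num)
  have h13 := log_le_of_pow 13 4 15 (by norm_num) (by norm_num) (by norm_num)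
  simp only [wq, cq, log_four]
  push_cast at *
  linarith

lemma wq_sum (Q : Finset ℕ) (s : ℕ) (hQ : ∀ q ∈ Q, q.Prime ∧ Odd q ∧ q ≤ s) :
    ∑ q ∈ Q, wq q ≤ 0.6173 := by
  rw [← Finset.sum_filter_add_sum_filter_not Q (fun q => q < 17)]
  have h1 : ∑ q ∈ Q with q < 17, wq q ≤ 0.4568 := by
    refine le_trans ?_ head_sum
    have : wq 3 + wq 5 + wq 7 + wq 11 + wq 13 = ∑ q ∈ ({3, 5, 7, 11, 13} : Finset ℕ), wq q := by
      simp; ring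
    rw [this]
    apply Finset.sum_le_sum_of_subset_of_nonneg
    · intro q hq
      rw [mem_filter] at hq
      obtain ⟨hqQ, hlt⟩ := hq
      obtain ⟨hp, ho, -⟩ := hQ q hqQ
      have := hp.two_le
      interval_cases q <;> first | (simp; done) | (exfalso; revert hp; norm_num; done) |
        (exfalso; revert ho; decide)
    · intro q hq _
      apply wq_nonneg
      simp only [mem_insert, mem_singleton] at hq
      rcases hq with h | h | h | h | h <;> subst h <;> norm_num
  have h2 : ∑ q ∈ Q with ¬ q < 17, wq q ≤ (Real.log 45 + 1) / 30 := by
    refine le_trans ?_ (tail_sum s)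
    rw [← Finset.sum_image (g := fun i => 17 + 2 * i)
      (f := fun q : ℕ => Real.log (3 * (q : ℝ)) / (q : ℝ) ^ 2)]
    · refine le_trans (Finset.sum_le_sum (g := fun q : ℕ => Real.log (3 * (q : ℝ)) / (q : ℝ) ^ 2)
        fun q hq => ?_) ?_
      · rw [mem_filter] at hq
        exact wq_large q (by omega)
      · apply Finset.sum_le_sum_of_subset_of_nonneg
        · intro q hq
          rw [mem_filter] at hq
          obtain ⟨hp, ho, hs⟩ := hQ q hq.1
          rw [Nat.odd_iff] at ho
          rw [mem_image]
          exact ⟨(q - 17) / 2, mem_range.mpr (by omega), by omega⟩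
        · intro q hq _
          rw [mem_image] at hq
          obtain ⟨i, _, rfl⟩ := hq
          apply div_nonneg _ (by positivity)
          apply Real.log_nonneg
          push_cast
          linarith [(Nat.cast_nonneg i : (0:ℝ) ≤ i)]
    · intro i _ j _ hij
      simp only at hij
      omega
  have h3 := log_le_of_pow 45 2 11 (by norm_num) (by norm_num) (by norm_num)
  have l2 := Real.log_two_lt_d9
  push_cast at h3
  linarith

lemma card_odd_le (Q : Finset ℕ) (s : ℕ) (hQ : ∀ q ∈ Q, q.Prime ∧ Odd q ∧ q ≤ s) :
    2 * Q.card ≤ s := by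
  have hsub : Q ⊆ image (fun i => 2 * i + 3) (range (s / 2)) := by
    intro q hq
    obtain ⟨hp, ho, hs⟩ := hQ q hq
    have := hp.two_le
    rw [Nat.odd_iff] at ho
    rw [mem_image]
    exact ⟨(q - 3) / 2, mem_range.mpr (by omega), by omega⟩
  have := (card_le_card hsub).trans card_image_le
  rw [card_range] at this
  omega

lemma error_sum (Q : Finset ℕ) (s : ℕ) (hs : 1 ≤ s) (hQ : ∀ q ∈ Q, q.Prime ∧ Odd q ∧ q ≤ s) :
    ∑ q ∈ Q, (3 / 2 * cq q + Real.log 4) ≤ s / 2 * (3 * Real.log s + 5) := by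
  have l2 := Real.log_two_lt_d9
  have hb : ∀ q ∈ Q, 3 / 2 * cq q + Real.log 4 ≤ 3 * Real.log s + 5 := by
    intro q hq
    obtain ⟨hp, ho, hle⟩ := hQ q hq
    have hq2 : (2:ℝ) ≤ q := by exact_mod_cast hp.two_le
    have h1 : Real.log q ≤ Real.log s :=
      Real.log_le_log (by linarith) (by exact_mod_cast hle)
    have h2 : Real.log q / (q - 1) ≤ 1 := by
      rw [div_le_one (by linarith)]
      exact Real.log_le_sub_one_of_pos (by linarith)
    rw [cq, log_four]
    linarith
  refine (Finset.sum_le_card_nsmul _ _ _ hb).trans ?_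
  rw [nsmul_eq_mul]
  have hc : (2:ℝ) * Q.card ≤ s := by exact_mod_cast card_odd_le Q s hQ
  have : 0 ≤ Real.log s := Real.log_natCast_nonneg s
  apply mul_le_mul_of_nonneg_right _ (by linarith)
  linarith

lemma final_ineq (x s : ℝ) (hx : 524288 ≤ x) (hs : s ≤ √x) (hs1 : 1 ≤ s) :
    x * 0.6173 + s / 2 * (3 * Real.log s + 5) + Real.log 2 <
      x * Real.log 2 - Real.log (x + 1) - 2 * √x * Real.log x := by
  have l2 := Real.log_two_lt_d9
  have l2' := Real.log_two_gt_d9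
  set t := √x with ht
  have hx0 : 0 ≤ x := by linarith
  have hxt : x = t ^ 2 := (Real.sq_sqrt hx0).symm
  have ht1 : 724 ≤ t := Real.le_sqrt_of_sq_le (by norm_num; linarith)
  have hlx : Real.log x = 2 * Real.log t := by rw [hxt, Real.log_pow]; norm_num
  have hls : Real.log s ≤ Real.log t := Real.log_le_log (by linarith) hs
  have hls0 : 0 ≤ Real.log s := Real.log_nonneg hs1
  have hlt : Real.log t ≤ t / 512 + 9 * Real.log 2 - 1 := by
    have h := Real.log_le_sub_one_of_pos (x := t / 512) (by positivity)
    rw [Real.log_div (by positivity) (by norm_num), show (512:ℝ) = 2 ^ 9 by norm_num,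
      Real.log_pow] at h
    norm_num at h ⊢
    linarith
  have hlx1 : Real.log (x + 1) ≤ Real.log 2 + 2 * Real.log t := by
    rw [← hlx, ← Real.log_mul (by norm_num) (by linarith)]
    exact Real.log_le_log (by linarith) (by linarith)
  have h1 : s / 2 * (3 * Real.log s + 5) ≤ t / 2 * (3 * Real.log t + 5) := by
    apply mul_le_mul <;> linarith
  have h2 : t * Real.log t ≤ t * (t / 512 + 9 * Real.log 2 - 1) :=
    mul_le_mul_of_nonneg_left hlt (by linarith)
  have h3 : t * Real.log 2 ≤ t * 0.6931471808 := mul_le_mul_of_nonneg_left l2.le (by linarith)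
  have h4 : t ^ 2 * 0.6931471803 ≤ t ^ 2 * Real.log 2 :=
    mul_le_mul_of_nonneg_left l2'.le (by positivity)
  rw [hlx, hxt] at *
  nlinarith

lemma sum_biUnion_le_aux (Q : Finset ℕ) (B : ℕ → Finset ℕ) (f : ℕ → ℝ) (hf : ∀ k, 0 ≤ f k) :
    ∑ p ∈ Q.biUnion B, f p ≤ ∑ q ∈ Q, ∑ p ∈ B q, f p := by
  induction Q using Finset.induction_on with
  | empty => simp
  | insert a Q ha ih =>
    rw [biUnion_insert, sum_insert ha]
    have h := Finset.sum_union_inter (s₁ := B a) (s₂ := Q.biUnion B) (f := f)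
    have h2 : 0 ≤ ∑ p ∈ B a ∩ Q.biUnion B, f p := Finset.sum_nonneg fun i _ => hf i
    linarith

lemma infinite_case (n : ℕ) (hn : 524288 ≤ n) (hne : Even n) :
    ∃ p k : ℕ, p.Prime ∧ Squarefree k ∧ Odd k ∧ n = p + k := by
  by_contra hcon
  push Not at hcon
  set s := Nat.sqrt n with hs
  set Q := {q ∈ range (s + 1) | q.Prime ∧ Odd q ∧ q ^ 2 < n} with hQdef
  have hQ : ∀ q ∈ Q, q.Prime ∧ Odd q ∧ q ≤ s := by
    intro q hq
    rw [hQdef, mem_filter, mem_range] at hq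
    exact ⟨hq.2.1, hq.2.2.1, by omega⟩
  have hnn : ∀ k : ℕ, 0 ≤ Real.log (k : ℝ) := fun k => Real.log_natCast_nonneg k
  have hcover : ({p ∈ Ioc 0 n | p.Prime}) ⊆ insert 2 (Q.biUnion (badPrimes n)) := by
    intro p hp
    rw [mem_filter, mem_Ioc] at hp
    obtain ⟨⟨hp0, hpn⟩, hpp⟩ := hp
    rw [mem_insert]
    rcases hpp.eq_two_or_odd with h | h
    · exact Or.inl h
    · right
      rw [Nat.even_iff] at hne
      have hlt : p < n := by
        rcases Nat.lt_or_eq_of_le hpn with h' | h'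
        · exact h'
        · omega
      have hodd : Odd (n - p) := by rw [Nat.odd_iff]; omega
      obtain ⟨q, hq, hqo, hqd⟩ := exists_odd_sq_of_not_squarefree (n - p) hodd
        (fun hsf => hcon p (n - p) hpp hsf hodd (by omega))
      have hle := Nat.le_of_dvd hodd.pos hqd
      rw [mem_biUnion]
      refine ⟨q, ?_, ?_⟩
      · rw [hQdef, mem_filter, mem_range]
        refine ⟨?_, hq, hqo, by omega⟩
        rw [Nat.lt_add_one_iff, hs, Nat.le_sqrt']
        omega
      · rw [badPrimes, mem_filter, mem_range]
        exact ⟨hlt, hpp, hodd, hqd⟩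
  have hθ : Chebyshev.theta (n : ℝ) ≤ Real.log 2 + ∑ q ∈ Q, ∑ p ∈ badPrimes n q, Real.log (p : ℝ) := by
    rw [Chebyshev.theta, Nat.floor_natCast]
    refine (Finset.sum_le_sum_of_subset_of_nonneg hcover (fun i _ _ => hnn i)).trans ?_
    have h1 : ∑ p ∈ insert 2 (Q.biUnion (badPrimes n)), Real.log (p : ℝ) ≤
        Real.log ((2 : ℕ) : ℝ) + ∑ p ∈ Q.biUnion (badPrimes n), Real.log (p : ℝ) := by
      by_cases h : 2 ∈ Q.biUnion (badPrimes n)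
      · rw [insert_eq_of_mem h]
        linarith [hnn 2]
      · rw [sum_insert h]
    refine h1.trans ?_
    push_cast
    gcongr
    exact sum_biUnion_le_aux Q (badPrimes n) _ hnn
  have hbad : ∑ q ∈ Q, ∑ p ∈ badPrimes n q, Real.log (p : ℝ) ≤
      (n : ℝ) * ∑ q ∈ Q, wq q + ∑ q ∈ Q, (3 / 2 * cq q + Real.log 4) := by
    rw [mul_sum, ← sum_add_distrib]
    apply Finset.sum_le_sum
    intro q hq
    rw [hQdef, mem_filter] at hq
    exact badPrimes_sum n q hq.2.1 hq.2.2.1 hne hq.2.2.2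
  have hs1 : 1 ≤ s := by rw [hs, Nat.le_sqrt']; omega
  have hw := mul_le_mul_of_nonneg_left (wq_sum Q s hQ) (Nat.cast_nonneg n : (0:ℝ) ≤ n)
  have he := error_sum Q s hs1 hQ
  have hlow := Chebyshev.theta_ge n
  have hfin := final_ineq n s (by exact_mod_cast hn) (Real.nat_sqrt_le_real_sqrt)
    (by exact_mod_cast hs1)
  linarith

end


/-- Every even integer greater than three can be written as the sum of a prime and an
odd square-free number. -/
theorem prime_add_odd_squarefree (n : ℕ) (hn : 3 < n) (hne : Even n) :
    ∃ p k : ℕ, p.Prime ∧ Squarefree k ∧ Odd k ∧ n = p + k := by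
  rcases Nat.le_total n 524288 with h | h
  · exact finite_case n hn h hne
  · exact infinite_case n h hne
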